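/- Let X ∈ ℝ^{n×d}, σ > 0, k ≥ 1, and let X' be obtained from X by replacing its i-th row x_i with the zero vector. Set Σ := XᵀX + σ²I_d and t := x_iᵀ Σ⁻¹ x_i. Then for every α > 1 with αt < 1, the α-Rényi divergence between the outputs of the Gaussian mixing mechanism satisfies the exact identity D_α(M(X)‖M(X')) = (k/(2(α−1))) · log( (1 − t)^α / (1 − αt) ). -/

import Mathlib

open MeasureTheory ProbabilityTheory Matrix

/-- Law of the Gaussian random matrix with i.i.d. standard Gaussian entries. -/
noncomputable def stdGaussMat (k n : ℕ) : Measure (Fin k → Fin n → ℝ) :=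
  Measure.pi fun _ => Measure.pi fun _ => gaussianReal 0 1

/-- The Gaussian mixing mechanism `M(X) = S X + σ ξ` with `S, ξ` independent
matrices of i.i.d. standard Gaussian entries: this is the law of the output. -/
noncomputable def gaussMix {n d : ℕ} (k : ℕ) (σ : ℝ) (X : Matrix (Fin n) (Fin d) ℝ) :
    Measure (Fin k → Fin d → ℝ) :=
  Measure.map (fun p => fun i j => (∑ l, p.1 i l * X l j) + σ * p.2 i j)
    ((stdGaussMat k n).prod (stdGaussMat k d))

/-- The `α`-Rényi divergence `D_α(P‖Q) = (α-1)⁻¹ log ∫ (dP/dQ)^α dQ`. -/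
noncomputable def renyiDiv {Ω : Type*} [MeasurableSpace Ω] (α : ℝ) (P Q : Measure Ω) : ℝ :=
  (α - 1)⁻¹ * Real.log (∫ x, ((P.rnDeriv Q) x).toReal ^ α ∂Q)

/-- The privacy curve `φ(α; k, ζ)`. -/
noncomputable def phi (α k ζ : ℝ) : ℝ :=
  k * α / (2 * (α - 1)) * Real.log (1 - 1 / ζ)
    - k / (2 * (α - 1)) * Real.log (1 - α / ζ)

/-- Minimal eigenvalue of a (Hermitian) real matrix. -/
noncomputable def lamMin {d : ℕ} (A : Matrix (Fin d) (Fin d) ℝ) : ℝ :=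
  if h : A.IsHermitian then ⨅ i, h.eigenvalues i else 0

/-!
Zeroing row `i` removes from each output row a summand `g • X i` with `g` an independent standard
Gaussian. When `t < 1`, the vector `X i` lies in the Cameron–Martin space of the remaining Gaussian,
so translating by `g • X i` has an explicit density, and averaging it over `g` gives a constant
times the exponential of the square of a linear functional. The `α`-th power of this density has the
same form, so up to a constant it is the averaged density of another such translation; that one has
total mass one, which evaluates the Rényi integral. The `k` output rows are i.i.d., which multiplies
the divergence of a single row by `k`.
-/

open Function
open scoped ENNReal NNReal

lemma withDensity_comp_map {α β : Type*} [MeasurableSpace α] [MeasurableSpace β] (μ : Measure α)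
    {g : α → β} (hg : Measurable g) {f : β → ℝ≥0∞} (hf : Measurable f) :
    (μ.withDensity (f ∘ g)).map g = (μ.map g).withDensity f := by
  ext s hs
  rw [Measure.map_apply hg hs, withDensity_apply _ (hg hs), withDensity_apply _ hs,
    setLIntegral_map hs hf hg]
  rfl

section Pi

variable {ι : Type*} [Fintype ι] {E : ι → Type*} [∀ j, MeasurableSpace (E j)]
  (μ : ∀ j, Measure (E j)) [∀ j, IsProbabilityMeasure (μ j)]

lemma lintegral_pi_prod_eq_prod {f : ∀ j, E j → ℝ≥0∞} (hf : ∀ j, Measurable (f j)) :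
    ∫⁻ z, ∏ j, f j (z j) ∂(Measure.pi μ) = ∏ j, ∫⁻ x, f j x ∂(μ j) := by
  have h_indep : iIndepFun (fun j (z : ∀ j, E j) => f j (z j)) (Measure.pi μ) :=
    iIndepFun_pi fun j => (hf j).aemeasurable
  exact (lintegral_prod_eq_prod_lintegral_of_indepFun Finset.univ _ h_indep
    fun j => (hf j).comp (measurable_pi_apply j)).trans <|
    Finset.prod_congr rfl fun j _ => (measurePreserving_eval μ j).lintegral_comp (hf j)

lemma pi_withDensity {f : ∀ j, E j → ℝ≥0∞} (hf : ∀ j, Measurable (f j))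
    [∀ j, SigmaFinite ((μ j).withDensity (f j))] :
    Measure.pi (fun j => (μ j).withDensity (f j))
      = (Measure.pi μ).withDensity fun z => ∏ j, f j (z j) := by
  classical
  refine Measure.pi_eq fun s hs => ?_
  have h_indicator : (Set.univ.pi s).indicator (fun z => ∏ j, f j (z j))
      = fun z => ∏ j, (s j).indicator (f j) (z j) := by
    funext z
    by_cases hz : z ∈ Set.univ.pi s
    · rw [Set.indicator_of_mem hz]
      exact Finset.prod_congr rfl fun j _ => (Set.indicator_of_mem (hz j (Set.mem_univ j)) _).symm
    · obtain ⟨j, hj⟩ : ∃ j, z j ∉ s j := by simpa [Set.mem_pi] using hz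
      rw [Set.indicator_of_notMem hz,
        Finset.prod_eq_zero (Finset.mem_univ j) (Set.indicator_of_notMem hj _)]
  rw [withDensity_apply _ (.univ_pi hs), ← lintegral_indicator (.univ_pi hs), h_indicator,
    lintegral_pi_prod_eq_prod μ fun j => (hf j).indicator (hs j)]
  exact Finset.prod_congr rfl fun j _ => by
    rw [lintegral_indicator (hs j), withDensity_apply _ (hs j)]

lemma map_update_prod_pi [DecidableEq ι] (i : ι) :
    ((Measure.pi μ).prod (μ i)).map (fun p => update p.1 i p.2) = Measure.pi μ := by
  refine (Measure.pi_eq fun s hs => ?_).symm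
  have h_preimage : (fun p : (∀ j, E j) × E i => update p.1 i p.2) ⁻¹' Set.univ.pi s
      = Set.univ.pi (update s i Set.univ) ×ˢ s i := by
    ext ⟨z, x⟩
    simp only [Set.mem_preimage, Set.mem_prod, Set.mem_univ_pi]
    rw [forall_update_iff z (fun j y => y ∈ s j), forall_update_iff s (fun j S => z j ∈ S)]
    simp [and_comm]
  rw [Measure.map_apply measurable_update' (.univ_pi hs), h_preimage, Measure.prod_prod,
    Measure.pi_pi, ← Finset.prod_erase_mul _ (fun j => μ j (s j)) (Finset.mem_univ i),
    ← Finset.prod_erase_mul _ _ (Finset.mem_univ i), update_self, measure_univ, mul_one]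
  congr 1
  exact Finset.prod_congr rfl fun j hj => by rw [update_of_ne (Finset.ne_of_mem_erase hj)]

lemma rnDeriv_pi {P Q : ∀ j, Measure (E j)} [∀ j, IsProbabilityMeasure (P j)]
    [∀ j, IsProbabilityMeasure (Q j)] (hPQ : ∀ j, P j ≪ Q j) :
    (Measure.pi P).rnDeriv (Measure.pi Q)
      =ᵐ[Measure.pi Q] fun z => ∏ j, (P j).rnDeriv (Q j) (z j) := by
  have hP (j : ι) : (Q j).withDensity ((P j).rnDeriv (Q j)) = P j :=
    Measure.withDensity_rnDeriv_eq _ _ (hPQ j)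
  have (j : ι) : SigmaFinite ((Q j).withDensity ((P j).rnDeriv (Q j))) := by
    rw [hP]
    infer_instance
  have h_pi := pi_withDensity Q fun j => Measure.measurable_rnDeriv (P j) (Q j)
  simp only [hP] at h_pi
  rw [h_pi]
  exact Measure.rnDeriv_withDensity _ (by fun_prop)

end Pi

section Renyi

variable {Ω : Type*} [MeasurableSpace Ω]

lemma renyiDiv_withDensity (α : ℝ) (Q : Measure Ω) [SigmaFinite Q] {f : Ω → ℝ}
    (hf : Measurable f) (hf0 : ∀ x, 0 ≤ f x) :
    renyiDiv α (Q.withDensity fun x => ENNReal.ofReal (f x)) Q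
      = (α - 1)⁻¹ * Real.log (∫ x, f x ^ α ∂Q) := by
  rw [renyiDiv]
  congr 2
  refine integral_congr_ae ?_
  filter_upwards [Measure.rnDeriv_withDensity Q hf.ennreal_ofReal] with x hx
  rw [hx, ENNReal.toReal_ofReal (hf0 x)]

lemma renyiDiv_pi (ι : Type*) [Fintype ι] (α : ℝ) {P Q : Measure Ω} [IsProbabilityMeasure P]
    [IsProbabilityMeasure Q] (hPQ : P ≪ Q) :
    renyiDiv α (Measure.pi fun _ : ι => P) (Measure.pi fun _ : ι => Q)
      = Fintype.card ι * renyiDiv α P Q := by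
  have h_int : ∫ z, ((Measure.pi fun _ : ι => P).rnDeriv (Measure.pi fun _ => Q) z).toReal ^ α
      ∂(Measure.pi fun _ : ι => Q) = (∫ x, (P.rnDeriv Q x).toReal ^ α ∂Q) ^ Fintype.card ι := by
    rw [← integral_fintype_prod_eq_pow (ι := ι) (μ := Q) fun x => (P.rnDeriv Q x).toReal ^ α]
    refine integral_congr_ae ?_
    filter_upwards [rnDeriv_pi fun _ => hPQ] with z hz
    rw [hz, ENNReal.toReal_prod, Real.finsetProd_rpow _ _ fun _ _ => ENNReal.toReal_nonneg]
  rw [renyiDiv, renyiDiv, h_int, Real.log_pow]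
  ring

end Renyi

section GaussianReal

lemma gaussianReal_map_add_const_eq_withDensity (m a : ℝ) {v : ℝ≥0} (hv : v ≠ 0) :
    (gaussianReal m v).map (· + a) = (gaussianReal m v).withDensity fun x =>
      ENNReal.ofReal (Real.exp ((a * (x - m) - a ^ 2 / 2) / v)) := by
  rw [gaussianReal_map_add_const, gaussianReal_of_var_ne_zero _ hv,
    gaussianReal_of_var_ne_zero _ hv, ← withDensity_mul _ (measurable_gaussianPDF _ _)
    (by fun_prop)]
  congr 1
  funext x
  have hv' : (v : ℝ) ≠ 0 := NNReal.coe_ne_zero.2 hv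
  rw [Pi.mul_apply, gaussianPDF, gaussianPDF, gaussianPDFReal, gaussianPDFReal,
    ← ENNReal.ofReal_mul (by positivity), mul_assoc (√_)⁻¹, ← Real.exp_add]
  congr 3
  field_simp
  ring

lemma gaussianPDFReal_mul_exp_mul_sub_sq (c x : ℝ) {s : ℝ} (hs : 0 < 1 + s) :
    gaussianPDFReal 0 1 x * Real.exp (c * x - s * x ^ 2 / 2)
      = (√(1 + s))⁻¹ * Real.exp (c ^ 2 / (2 * (1 + s)))
        * gaussianPDFReal (c / (1 + s)) (1 + s)⁻¹.toNNReal x := by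
  have h_var : ((1 + s)⁻¹.toNNReal : ℝ) = (1 + s)⁻¹ := Real.coe_toNNReal _ (by positivity)
  have h_exponent : -(x - 0) ^ 2 / (2 * 1) + (c * x - s * x ^ 2 / 2)
      = c ^ 2 / (2 * (1 + s)) + -(x - c / (1 + s)) ^ 2 / (2 * (1 + s)⁻¹) := by
    field_simp
    ring
  rw [gaussianPDFReal, gaussianPDFReal, h_var, NNReal.coe_one, mul_assoc, ← Real.exp_add,
    h_exponent, Real.exp_add, Real.sqrt_mul (by positivity) (1 + s)⁻¹, Real.sqrt_inv, mul_one]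
  field_simp

lemma lintegral_exp_mul_sub_sq_gaussianReal (c : ℝ) {s : ℝ} (hs : 0 < 1 + s) :
    ∫⁻ x, ENNReal.ofReal (Real.exp (c * x - s * x ^ 2 / 2)) ∂(gaussianReal 0 1)
      = ENNReal.ofReal ((√(1 + s))⁻¹ * Real.exp (c ^ 2 / (2 * (1 + s)))) := by
  have h_var : (1 + s)⁻¹.toNNReal ≠ 0 := (Real.toNNReal_pos.2 (by positivity)).ne'
  rw [gaussianReal_of_var_ne_zero _ one_ne_zero,
    lintegral_withDensity_eq_lintegral_mul _ (measurable_gaussianPDF _ _) (by fun_prop)]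
  simp only [Pi.mul_apply, gaussianPDF]
  simp_rw [← ENNReal.ofReal_mul (gaussianPDFReal_nonneg 0 1 _),
    gaussianPDFReal_mul_exp_mul_sub_sq c _ hs]
  simp_rw [ENNReal.ofReal_mul (p := (√(1 + s))⁻¹ * Real.exp (c ^ 2 / (2 * (1 + s))))
    (by positivity)]
  rw [lintegral_const_mul _ (by fun_prop), lintegral_gaussianPDFReal_eq_one _ h_var, mul_one]

end GaussianReal

section StdGaussVec

/-- The law of a random vector indexed by `ι` with i.i.d. standard Gaussian entries, on the plain
function space `ι → ℝ` (rather than `EuclideanSpace ℝ ι`) so that `Matrix` operations apply. -/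
noncomputable def stdGaussVec (ι : Type*) [Fintype ι] : Measure (ι → ℝ) :=
  Measure.pi fun _ => gaussianReal 0 1

variable {ι κ : Type*} [Fintype ι]

instance : IsProbabilityMeasure (stdGaussVec ι) :=
  inferInstanceAs (IsProbabilityMeasure (Measure.pi fun _ : ι => gaussianReal 0 1))

@[fun_prop]
lemma measurable_dotProduct (a : ι → ℝ) : Measurable fun z : ι → ℝ => a ⬝ᵥ z := by
  unfold dotProduct
  fun_prop

@[fun_prop]
lemma measurable_vecMul (W : Matrix ι κ ℝ) : Measurable fun z : ι → ℝ => z ᵥ* W := by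
  unfold vecMul dotProduct
  fun_prop

lemma stdGaussVec_map_add_const_eq_withDensity (a : ι → ℝ) :
    (stdGaussVec ι).map (· + a) = (stdGaussVec ι).withDensity fun z =>
      ENNReal.ofReal (Real.exp (a ⬝ᵥ z - a ⬝ᵥ a / 2)) := by
  have h_coord (j : ι) : (gaussianReal 0 1).map (· + a j) = (gaussianReal 0 1).withDensity
      fun x => ENNReal.ofReal (Real.exp (a j * x - a j ^ 2 / 2)) := by
    simpa using gaussianReal_map_add_const_eq_withDensity 0 (a j) one_ne_zero
  have h_sigmaFinite (j : ι) : SigmaFinite ((gaussianReal 0 1).map (· + a j)) := by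
    rw [gaussianReal_map_add_const]
    infer_instance
  have h_pi := Measure.pi_map_pi (μ := fun _ : ι => gaussianReal 0 1) (f := fun j x => x + a j)
    fun j => by fun_prop
  simp only [h_coord] at h_pi h_sigmaFinite
  rw [pi_withDensity _ fun j => by fun_prop] at h_pi
  refine h_pi.trans (congrArg _ (funext fun z => ?_))
  rw [← ENNReal.ofReal_prod_of_nonneg fun j _ => (Real.exp_pos _).le, ← Real.exp_sum]
  simp only [dotProduct, Finset.sum_sub_distrib, Finset.sum_div, sq]

lemma stdGaussVec_prod_map_add_smul_eq_withDensity (a : ι → ℝ) :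
    ((stdGaussVec ι).prod (gaussianReal 0 1)).map (fun p => p.1 + p.2 • a)
      = (stdGaussVec ι).withDensity fun z => ENNReal.ofReal
          ((√(1 + a ⬝ᵥ a))⁻¹ * Real.exp ((a ⬝ᵥ z) ^ 2 / (2 * (1 + a ⬝ᵥ a)))) := by
  have h_pos : 0 < 1 + a ⬝ᵥ a :=
    add_pos_of_pos_of_nonneg one_pos (Finset.sum_nonneg fun j _ => mul_self_nonneg (a j))
  have h_shift {φ : (ι → ℝ) → ℝ≥0∞} (hφ : Measurable φ) (g : ℝ) :
      ∫⁻ z, φ (z + g • a) ∂(stdGaussVec ι)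
        = ∫⁻ z, ENNReal.ofReal (Real.exp ((a ⬝ᵥ z) * g - (a ⬝ᵥ a) * g ^ 2 / 2)) * φ z
          ∂(stdGaussVec ι) := by
    rw [← lintegral_map (g := (· + g • a)) hφ (by fun_prop),
      stdGaussVec_map_add_const_eq_withDensity,
      lintegral_withDensity_eq_lintegral_mul _ (by fun_prop) hφ]
    refine lintegral_congr fun z => ?_
    simp only [Pi.mul_apply, smul_dotProduct, dotProduct_smul, smul_eq_mul]
    ring_nf
  refine Measure.ext_of_lintegral _ fun φ hφ => ?_
  rw [lintegral_map hφ (by fun_prop), lintegral_prod_symm' _ (by fun_prop),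
    lintegral_withDensity_eq_lintegral_mul _ (by fun_prop) hφ]
  simp only [h_shift hφ]
  rw [lintegral_lintegral_swap (by fun_prop)]
  refine lintegral_congr fun z => ?_
  rw [lintegral_mul_const _ (by fun_prop), lintegral_exp_mul_sub_sq_gaussianReal _ h_pos]
  rfl

lemma integral_exp_sq_dotProduct_stdGaussVec (a : ι → ℝ) {β : ℝ} (hβ : 0 ≤ β)
    (hβa : β * (a ⬝ᵥ a) < 1) :
    ∫ z, Real.exp (β * (a ⬝ᵥ z) ^ 2 / 2) ∂(stdGaussVec ι) = (√(1 - β * (a ⬝ᵥ a)))⁻¹ := by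
  have h_pos : 0 < 1 - β * (a ⬝ᵥ a) := sub_pos.2 hβa
  -- With `b` in place of `a`, the density of `stdGaussVec_prod_map_add_smul_eq_withDensity` becomes
  -- a multiple of the integrand, and it has total mass one.
  set b : ι → ℝ := √(β / (1 - β * (a ⬝ᵥ a))) • a with hb
  have h_sq : √(β / (1 - β * (a ⬝ᵥ a))) ^ 2 = β / (1 - β * (a ⬝ᵥ a)) :=
    Real.sq_sqrt (by positivity)
  have h_norm : 1 + b ⬝ᵥ b = (1 - β * (a ⬝ᵥ a))⁻¹ := by
    rw [hb, smul_dotProduct, dotProduct_smul, smul_eq_mul, smul_eq_mul, ← mul_assoc, ← sq, h_sq]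
    field_simp
    ring
  have h_exponent (z : ι → ℝ) : (b ⬝ᵥ z) ^ 2 / (2 * (1 + b ⬝ᵥ b)) = β * (a ⬝ᵥ z) ^ 2 / 2 := by
    rw [h_norm, hb, smul_dotProduct, smul_eq_mul, mul_pow, h_sq]
    field_simp
  have h_prob : IsProbabilityMeasure
      (((stdGaussVec ι).prod (gaussianReal 0 1)).map fun p => p.1 + p.2 • b) :=
    Measure.isProbabilityMeasure_map (by fun_prop)
  have h_mass := h_prob.measure_univ
  simp only [stdGaussVec_prod_map_add_smul_eq_withDensity, withDensity_apply _ MeasurableSet.univ,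
    Measure.restrict_univ, h_exponent] at h_mass
  rw [h_norm, Real.sqrt_inv, inv_inv] at h_mass
  refine eq_inv_of_mul_eq_one_right ?_
  rw [← integral_const_mul,
    integral_eq_lintegral_of_nonneg_ae (ae_of_all _ fun z => by positivity) (by fun_prop), h_mass,
    ENNReal.toReal_one]

end StdGaussVec

section MatrixIdentities

variable {ι κ : Type*} [Fintype ι]

lemma dotProduct_vecMul_eq_mulVec_dotProduct [Fintype κ] (W : Matrix ι κ ℝ) (w : κ → ℝ)
    (z : ι → ℝ) : w ⬝ᵥ (z ᵥ* W) = (W *ᵥ w) ⬝ᵥ z := by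
  rw [dotProduct_comm, ← dotProduct_mulVec, dotProduct_comm]

variable [DecidableEq ι]

lemma update_vecMul_updateRow (W : Matrix ι κ ℝ) (i : ι) (z : ι → ℝ) (c : ℝ) (r : κ → ℝ) :
    update z i c ᵥ* W.updateRow i r = z ᵥ* W.updateRow i 0 + c • r := by
  have h_off (j : ι) (hj : j ∈ ({i}ᶜ : Finset ι)) :
      update z i c j • W.updateRow i r j = z j • W.updateRow i 0 j := by
    have hji : j ≠ i := by simpa using hj
    rw [update_of_ne hji, updateRow_ne hji, updateRow_ne hji]
  simp_rw [vecMul_eq_sum, Fintype.sum_eq_add_sum_compl i, updateRow_self, update_self, smul_zero,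
    zero_add]
  rw [Finset.sum_congr rfl h_off, add_comm]

lemma mulVec_vecMul_updateRow_zero [Fintype κ] {W : Matrix ι κ ℝ} {i : ι} {w : κ → ℝ}
    (hw : (Wᵀ * W) *ᵥ w = W i) :
    (W.updateRow i 0 *ᵥ w) ᵥ* W.updateRow i 0 = (1 - W i ⬝ᵥ w) • W i := by
  have h_split : (W *ᵥ w) ᵥ* W = (W *ᵥ w) ᵥ* W.updateRow i 0 + (W i ⬝ᵥ w) • W i := by
    rw [← update_vecMul_updateRow, updateRow_eq_self]
    congr 1
    exact (update_eq_self i _).symm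
  rw [updateRow_mulVec, update_vecMul_updateRow, smul_zero, add_zero, sub_smul, one_smul,
    eq_sub_iff_add_eq, ← h_split, ← mulVec_transpose, mulVec_mulVec, hw]

lemma dotProduct_self_updateRow_zero_mulVec [Fintype κ] {W : Matrix ι κ ℝ} {i : ι} {w : κ → ℝ}
    (hw : (Wᵀ * W) *ᵥ w = W i) :
    (W.updateRow i 0 *ᵥ w) ⬝ᵥ (W.updateRow i 0 *ᵥ w) = (1 - W i ⬝ᵥ w) * (W i ⬝ᵥ w) := by
  rw [dotProduct_mulVec, mulVec_vecMul_updateRow_zero hw, smul_dotProduct, smul_eq_mul]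

end MatrixIdentities

section GaussRow

/-- The law of the Gaussian row vector `zᵀ W`, where `z` has i.i.d. standard Gaussian entries; its
covariance matrix is `Wᵀ W`, which may be singular. -/
noncomputable def gaussRow {ι κ : Type*} [Fintype ι] (W : Matrix ι κ ℝ) : Measure (κ → ℝ) :=
  (stdGaussVec ι).map (· ᵥ* W)

variable {ι κ : Type*} [Fintype ι]

instance (W : Matrix ι κ ℝ) : IsProbabilityMeasure (gaussRow W) :=
  Measure.isProbabilityMeasure_map (by fun_prop)

lemma gaussRow_updateRow [DecidableEq ι] (W : Matrix ι κ ℝ) (i : ι) (r : κ → ℝ) :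
    gaussRow (W.updateRow i r) = ((stdGaussVec ι).prod (gaussianReal 0 1)).map
      fun p => p.1 ᵥ* W.updateRow i 0 + p.2 • r := by
  have h_update : ((stdGaussVec ι).prod (gaussianReal 0 1)).map (fun p => update p.1 i p.2)
      = stdGaussVec ι := map_update_prod_pi _ i
  rw [gaussRow]
  conv_lhs => rw [← h_update, Measure.map_map (by fun_prop) measurable_update']
  exact congrArg (Measure.map · _) (funext fun p => update_vecMul_updateRow W i p.1 p.2 r)

lemma gaussRow_fromRows {ι' : Type*} [Fintype ι'] (A : Matrix ι κ ℝ) (B : Matrix ι' κ ℝ) :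
    gaussRow (fromRows A B)
      = ((stdGaussVec ι).prod (stdGaussVec ι')).map fun p => p.1 ᵥ* A + p.2 ᵥ* B := by
  have h_sum : ((stdGaussVec ι).prod (stdGaussVec ι')).map
      (MeasurableEquiv.sumPiEquivProdPi fun _ => ℝ).symm = stdGaussVec (ι ⊕ ι') :=
    (measurePreserving_sumPiEquivProdPi_symm fun _ : ι ⊕ ι' => gaussianReal 0 1).map_eq
  rw [gaussRow, ← h_sum, Measure.map_map (by fun_prop) (MeasurableEquiv.measurable _)]
  refine congrArg (Measure.map · _) (funext fun p => ?_)
  exact sumElim_vecMul_fromRows A B p.1 p.2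

variable [DecidableEq ι] [Fintype κ] {W : Matrix ι κ ℝ} {i : ι} {w : κ → ℝ}

lemma gaussRow_eq_withDensity (hw : (Wᵀ * W) *ᵥ w = W i) (ht : W i ⬝ᵥ w < 1) :
    gaussRow W = (gaussRow (W.updateRow i 0)).withDensity fun y => ENNReal.ofReal
      (√(1 - W i ⬝ᵥ w) * Real.exp ((w ⬝ᵥ y) ^ 2 / (2 * (1 - W i ⬝ᵥ w)))) := by
  set V := W.updateRow i 0 with hV
  set t := W i ⬝ᵥ w
  have h_pos : 0 < 1 - t := sub_pos.2 ht
  set a : ι → ℝ := (1 - t)⁻¹ • (V *ᵥ w) with ha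
  have h_row : a ᵥ* V = W i := by
    rw [ha, smul_vecMul, mulVec_vecMul_updateRow_zero hw, inv_smul_smul₀ h_pos.ne']
  have h_norm : 1 + a ⬝ᵥ a = (1 - t)⁻¹ := by
    rw [ha, smul_dotProduct, dotProduct_smul, dotProduct_self_updateRow_zero_mulVec hw]
    simp only [smul_eq_mul]
    field_simp
    ring
  have h_functional (z : ι → ℝ) : a ⬝ᵥ z = (1 - t)⁻¹ * (w ⬝ᵥ (z ᵥ* V)) := by
    rw [ha, smul_dotProduct, smul_eq_mul, dotProduct_vecMul_eq_mulVec_dotProduct]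
  have h_density (z : ι → ℝ) : (√(1 + a ⬝ᵥ a))⁻¹ * Real.exp ((a ⬝ᵥ z) ^ 2 / (2 * (1 + a ⬝ᵥ a)))
      = √(1 - t) * Real.exp ((w ⬝ᵥ (z ᵥ* V)) ^ 2 / (2 * (1 - t))) := by
    rw [h_norm, h_functional, Real.sqrt_inv, inv_inv]
    congr 2
    field_simp
  calc gaussRow W
      = ((stdGaussVec ι).prod (gaussianReal 0 1)).map (fun p => p.1 ᵥ* V + p.2 • W i) := by
        rw [hV, ← gaussRow_updateRow, updateRow_eq_self]
    _ = (((stdGaussVec ι).prod (gaussianReal 0 1)).map (fun p => p.1 + p.2 • a)).map (· ᵥ* V) := by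
        rw [Measure.map_map (by fun_prop) (by fun_prop)]
        simp only [Function.comp_def, add_vecMul, smul_vecMul, h_row]
    _ = _ := by
        rw [stdGaussVec_prod_map_add_smul_eq_withDensity, gaussRow,
          ← withDensity_comp_map _ (by fun_prop) (by fun_prop)]
        simp only [h_density, Function.comp_def]

lemma renyiDiv_gaussRow_updateRow_zero (hw : (Wᵀ * W) *ᵥ w = W i) (ht : W i ⬝ᵥ w < 1) {α : ℝ}
    (hα : 0 ≤ α) (hαt : α * (W i ⬝ᵥ w) < 1) :
    renyiDiv α (gaussRow W) (gaussRow (W.updateRow i 0))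
      = (2 * (α - 1))⁻¹ * Real.log ((1 - W i ⬝ᵥ w) ^ α / (1 - α * (W i ⬝ᵥ w))) := by
  set V := W.updateRow i 0 with hV
  set t := W i ⬝ᵥ w with ht_def
  have h_pos : 0 < 1 - t := sub_pos.2 ht
  have h_posα : 0 < 1 - α * t := sub_pos.2 hαt
  have h_rpow (z : ι → ℝ) : (√(1 - t) * Real.exp ((w ⬝ᵥ (z ᵥ* V)) ^ 2 / (2 * (1 - t)))) ^ α
      = √(1 - t) ^ α * Real.exp (α / (1 - t) * ((V *ᵥ w) ⬝ᵥ z) ^ 2 / 2) := by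
    rw [Real.mul_rpow (by positivity) (by positivity), ← Real.exp_mul,
      dotProduct_vecMul_eq_mulVec_dotProduct]
    congr 2
    field_simp
  have h_variance : α / (1 - t) * ((V *ᵥ w) ⬝ᵥ (V *ᵥ w)) = α * t := by
    rw [hV, dotProduct_self_updateRow_zero_mulVec hw, ← ht_def]
    field_simp
  have h_int : ∫ y, (√(1 - t) * Real.exp ((w ⬝ᵥ y) ^ 2 / (2 * (1 - t)))) ^ α ∂(gaussRow V)
      = √(1 - t) ^ α * (√(1 - α * t))⁻¹ := by
    rw [gaussRow, integral_map (by fun_prop) (by fun_prop)]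
    simp only [h_rpow]
    rw [integral_const_mul, integral_exp_sq_dotProduct_stdGaussVec _ (by positivity)
      (h_variance.trans_lt hαt), h_variance]
  rw [gaussRow_eq_withDensity hw ht, renyiDiv_withDensity _ _ (by fun_prop) fun y => by positivity,
    h_int, Real.log_mul (by positivity) (by positivity), Real.log_div (by positivity) h_posα.ne',
    Real.log_rpow (by positivity), Real.log_rpow h_pos, Real.log_inv, Real.log_sqrt h_pos.le,
    Real.log_sqrt h_posα.le, mul_inv]
  ring

end GaussRow

section RidgeAugment

variable {ι κ : Type*} [DecidableEq κ]

/-- The data matrix `X` stacked on top of `σ I`, with Gram matrix `XᵀX + σ² I`: an output row of the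
Gaussian mixing mechanism is `zᵀ` times this matrix, for a standard Gaussian vector `z`. -/
noncomputable def ridgeAugment (X : Matrix ι κ ℝ) (σ : ℝ) : Matrix (ι ⊕ κ) κ ℝ :=
  fromRows X (σ • 1)

lemma ridgeAugment_updateRow [DecidableEq ι] (X : Matrix ι κ ℝ) (σ : ℝ) (i : ι) (r : κ → ℝ) :
    ridgeAugment (X.updateRow i r) σ = (ridgeAugment X σ).updateRow (Sum.inl i) r := by
  ext (j | j) c <;> simp [ridgeAugment, updateRow_apply]

variable [Fintype ι]

lemma posDef_transpose_mul_self_add_sq_smul_one [Finite κ] (X : Matrix ι κ ℝ) {σ : ℝ} (hσ : σ ≠ 0) :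
    (Xᵀ * X + σ ^ 2 • (1 : Matrix κ κ ℝ)).PosDef := by
  refine PosDef.posSemidef_add ?_ (PosDef.one.smul (by positivity))
  simpa using posSemidef_conjTranspose_mul_self X

variable [Fintype κ]

lemma transpose_mul_self_add_sq_smul_one_mulVec_inv_mulVec (X : Matrix ι κ ℝ) {σ : ℝ}
    (hσ : σ ≠ 0) (v : κ → ℝ) :
    (Xᵀ * X + σ ^ 2 • 1) *ᵥ ((Xᵀ * X + σ ^ 2 • 1)⁻¹ *ᵥ v) = v := by
  have h_det := (posDef_transpose_mul_self_add_sq_smul_one X hσ).det_pos.ne'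
  rw [mulVec_mulVec, mul_nonsing_inv _ h_det.isUnit, one_mulVec]

lemma transpose_mul_self_ridgeAugment (X : Matrix ι κ ℝ) (σ : ℝ) :
    (ridgeAugment X σ)ᵀ * ridgeAugment X σ = Xᵀ * X + σ ^ 2 • 1 := by
  rw [ridgeAugment, transpose_fromRows, fromCols_mul_fromRows, transpose_smul, transpose_one,
    smul_mul_smul_comm, one_mul, sq]

lemma gaussRow_ridgeAugment (X : Matrix ι κ ℝ) (σ : ℝ) :
    gaussRow (ridgeAugment X σ)
      = ((stdGaussVec ι).prod (stdGaussVec κ)).map fun p => p.1 ᵥ* X + σ • p.2 := by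
  simp only [ridgeAugment, gaussRow_fromRows, vecMul_smul, vecMul_one]

end RidgeAugment

section GaussMix

variable {n d : ℕ}

lemma gaussMix_eq_pi (k : ℕ) (σ : ℝ) (X : Matrix (Fin n) (Fin d) ℝ) :
    gaussMix k σ X = Measure.pi fun _ : Fin k => gaussRow (ridgeAugment X σ) := by
  have h_std (m : ℕ) : stdGaussMat k m = Measure.pi fun _ => stdGaussVec (Fin m) := rfl
  have h_zip := (measurePreserving_arrowProdEquivProdArrow (Fin n → ℝ) (Fin d → ℝ) (Fin k)
    (fun _ => stdGaussVec (Fin n)) (fun _ => stdGaussVec (Fin d))).map_eq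
  have : IsProbabilityMeasure
      (((stdGaussVec (Fin n)).prod (stdGaussVec (Fin d))).map fun p => p.1 ᵥ* X + σ • p.2) :=
    Measure.isProbabilityMeasure_map (by fun_prop)
  simp only [gaussRow_ridgeAugment]
  rw [← Measure.pi_map_pi fun _ => by fun_prop, gaussMix, h_std, h_std, ← h_zip,
    Measure.map_map (by fun_prop) (MeasurableEquiv.measurable _)]
  rfl

theorem gaussMix_renyiDiv_eq_general (X : Matrix (Fin n) (Fin d) ℝ) (σ : ℝ) (k : ℕ) (i : Fin n)
    {w : Fin d → ℝ} (hw : (Xᵀ * X + σ ^ 2 • (1 : Matrix (Fin d) (Fin d) ℝ)) *ᵥ w = X i)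
    (ht : X i ⬝ᵥ w < 1) {α : ℝ} (hα₀ : 0 ≤ α) (hα₁ : α ≠ 1) (hαt : α * (X i ⬝ᵥ w) < 1) :
    renyiDiv α (gaussMix k σ X) (gaussMix k σ (X.updateRow i 0))
      = k / (2 * (α - 1)) * Real.log ((1 - X i ⬝ᵥ w) ^ α / (1 - α * (X i ⬝ᵥ w))) := by
  set W := ridgeAugment X σ with hW
  have h_row : W (Sum.inl i) = X i := rfl
  have h_solve : (Wᵀ * W) *ᵥ w = W (Sum.inl i) := by
    rw [hW, transpose_mul_self_ridgeAugment, hw, ← h_row]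
  have h_ac : gaussRow W ≪ gaussRow (W.updateRow (Sum.inl i) 0) := by
    rw [gaussRow_eq_withDensity h_solve ht]
    exact withDensity_absolutelyContinuous _ _
  have h_one_row := renyiDiv_gaussRow_updateRow_zero h_solve ht hα₀ hαt
  rw [gaussMix_eq_pi, gaussMix_eq_pi, ridgeAugment_updateRow, renyiDiv_pi _ _ h_ac,
    Fintype.card_fin, h_one_row, h_row]
  have h_ne : α - 1 ≠ 0 := sub_ne_zero.2 hα₁
  field_simp

end GaussMix

/-- exact identity for the Rényi divergence between outputs of the
Gaussian mixing mechanism on a dataset and its zero-out neighbor. -/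
theorem gaussMix_renyiDiv_eq {n d : ℕ} (X : Matrix (Fin n) (Fin d) ℝ)
    (σ : ℝ) (hσ : 0 < σ) (k : ℕ) (hk : 1 ≤ k)
    (i : Fin n) (X' : Matrix (Fin n) (Fin d) ℝ) (hX' : X' = X.updateRow i 0)
    (Sig : Matrix (Fin d) (Fin d) ℝ) (hSig : Sig = Xᵀ * X + σ ^ 2 • (1 : Matrix (Fin d) (Fin d) ℝ))
    (t : ℝ) (ht : t = X i ⬝ᵥ (Sig⁻¹ *ᵥ X i))
    (α : ℝ) (hα : 1 < α) (hαt : α * t < 1) :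
    renyiDiv α (gaussMix k σ X) (gaussMix k σ X')
      = (k / (2 * (α - 1))) * Real.log ((1 - t) ^ α / (1 - α * t)) := by
  subst hX' hSig ht
  exact gaussMix_renyiDiv_eq_general X σ k i
    (transpose_mul_self_add_sq_smul_one_mulVec_inv_mulVec X hσ.ne' _) (by nlinarith) (by linarith)
    hα.ne' hαt
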